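/- arXiv:math/0502322 — 2 statements merged into one kernel-verified Lean document; each statement's English description precedes it below -/
import Mathlib

section
/- Let F, G : ℝ → ℝ be continuous functions with F(x+1) = F(x) and G(x+1) = G(x) for all x ∈ ℝ, and with G(x) > 0 for all x. Let γ₁, γ₂ : ℝ → ℝ be differentiable functions satisfying γ₁′(s) = G(γ₁(s)) and γ₂′(s) = F(γ₁(s)) for all s ∈ ℝ. If the real number ∫₀¹ F(x)/G(x) dx is irrational, then there exist no s₀ ∈ ℝ and T > 0 such that both γ₁(s₀+T) − γ₁(s₀) ∈ ℤ and γ₂(s₀+T) − γ₂(s₀) ∈ ℤ. -/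
/-- Example 2.4: if `∫₀¹ F/G` is irrational, no integral curve of the vector field
`W = G(x)∂ₓ + F(x)∂_y` on `ℝ²` (with `F, G` of period `1`, `G > 0`) closes up
modulo `ℤ × ℤ`, i.e. projects to a closed curve on the torus. -/
theorem stmt_2 (F G : ℝ → ℝ) (hF : Continuous F) (hG : Continuous G)
    (hFper : ∀ x : ℝ, F (x + 1) = F x) (hGper : ∀ x : ℝ, G (x + 1) = G x)
    (hGpos : ∀ x : ℝ, 0 < G x)
    (γ₁ γ₂ : ℝ → ℝ)
    (hγ₁ : ∀ s : ℝ, HasDerivAt γ₁ (G (γ₁ s)) s)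
    (hγ₂ : ∀ s : ℝ, HasDerivAt γ₂ (F (γ₁ s)) s)
    (hirr : Irrational (∫ x in (0:ℝ)..1, F x / G x)) :
    ¬ ∃ (s₀ T : ℝ), 0 < T ∧
      (∃ m : ℤ, γ₁ (s₀ + T) - γ₁ s₀ = (m : ℝ)) ∧
      (∃ n : ℤ, γ₂ (s₀ + T) - γ₂ s₀ = (n : ℝ)) := by
  rintro ⟨s₀, T, hT, ⟨m, hm⟩, ⟨n, hn⟩⟩
  have hc : Continuous γ₁ := continuous_iff_continuousAt.2 fun s => (hγ₁ s).continuousAt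
  have hmono : StrictMono γ₁ := strictMono_of_deriv_pos fun s => by
    rw [(hγ₁ s).deriv]; exact hGpos _
  have hlt : γ₁ s₀ < γ₁ (s₀ + T) := hmono (by linarith)
  have hm0 : (m : ℝ) ≠ 0 := by rw [← hm]; exact (sub_pos.2 hlt).ne'
  have hq : Continuous (fun x => F x / G x) := hF.div hG fun x => (hGpos x).ne'
  have hper : Function.Periodic (fun x => F x / G x) 1 := fun x => by
    simp only [hFper, hGper]
  have h1 : ∫ s in s₀..(s₀ + T), F (γ₁ s) = γ₂ (s₀ + T) - γ₂ s₀ :=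
    intervalIntegral.integral_eq_sub_of_hasDerivAt (fun s _ => hγ₂ s)
      ((hF.comp hc).intervalIntegrable _ _)
  have h2 := intervalIntegral.integral_comp_mul_deriv (a := s₀) (b := s₀ + T)
    (fun s _ => hγ₁ s) (hG.comp hc).continuousOn hq
  have h3 : ∀ s, ((fun x => F x / G x) ∘ γ₁) s * G (γ₁ s) = F (γ₁ s) := fun s =>
    div_mul_cancel₀ _ (hGpos _).ne'
  simp only [h3] at h2
  have h4 := hper.intervalIntegral_add_zsmul_eq m (γ₁ s₀)
    (fun a b => hq.intervalIntegrable a b)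
  rw [hper.intervalIntegral_add_eq (γ₁ s₀) 0, zero_add] at h4
  have h5 : γ₁ s₀ + m • (1 : ℝ) = γ₁ (s₀ + T) := by
    rw [zsmul_eq_mul, mul_one, ← hm]; ring
  rw [h5, ← h2, h1, hn, zsmul_eq_mul] at h4
  apply hirr
  refine ⟨(n : ℚ) / m, ?_⟩
  push_cast
  rw [h4, mul_div_cancel_left₀ _ hm0]
end

section
/- Let S be a topological space and let G be a group acting on ℝ × S by maps of the form g·(t,x) = (t + T_g, σ_g(x)), where T_g ∈ ℝ and each σ_g : S → S is a homeomorphism. Let d : (ℝ × S) × (ℝ × S) → ℝ be continuous and nonnegative, invariant under the G-action (d(g·p, g·q) = d(p,q) for all g ∈ G) and invariant under all time translations τ_s(t,x) = (t+s, x) (d(τ_s p, τ_s q) = d(p,q) for all s ∈ ℝ). Fix φ₀ ∈ G, set T = T_{φ₀}, and let C = {ψ⁻¹φ₀ψ : ψ ∈ G} be its conjugacy class (so T_φ = T for all φ ∈ C, since g ↦ T_g is a homomorphism into the abelian group ℝ). Let K^S ⊆ S be a compact subset with ⋃_{g∈G} σ_g(K^S) = S. Assume that the set of φ ∈ C for which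 there exists x ∈ K^S with d((0,x),(T, σ_φ(x))) ≠ 0 is finite. Then the function d_S : S → ℝ, d_S(x) = d((0,x), (T, σ_{φ₀}(x))), attains its maximum on S. -/
/-- The core of the proof of Proposition 4.4: with a group `G` acting on `ℝ × S` by
`g • (t,x) = (t + T g, σ g x)`, a continuous nonnegative `d` invariant under the
action and under time translations, a compact `K^S ⊆ S` whose images `σ g '' K^S`
cover `S`, and only finitely many conjugates `φ` of `φ₀` with
`d((0,x),(T φ₀, σ φ x)) ≢ 0` on `K^S`, the function
`x ↦ d((0,x),(T φ₀, σ φ₀ x))` attains its maximum on `S`. -/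
theorem stmt_6 (S : Type*) [TopologicalSpace S] [Nonempty S]
    (G : Type*) [Group G]
    (T : G → ℝ) (σ : G → S ≃ₜ S)
    (hT : ∀ g h : G, T (g * h) = T g + T h)
    (hσone : ∀ x : S, σ 1 x = x)
    (hσmul : ∀ (g h : G) (x : S), σ (g * h) x = σ g (σ h x))
    (d : (ℝ × S) → (ℝ × S) → ℝ)
    (hdcont : Continuous fun p : (ℝ × S) × (ℝ × S) => d p.1 p.2)
    (hdnonneg : ∀ p q : ℝ × S, 0 ≤ d p q)
    (hdinv : ∀ (g : G) (p q : ℝ × S),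
      d (p.1 + T g, σ g p.2) (q.1 + T g, σ g q.2) = d p q)
    (hdtrans : ∀ (s : ℝ) (p q : ℝ × S),
      d (p.1 + s, p.2) (q.1 + s, q.2) = d p q)
    (φ₀ : G)
    (KS : Set S) (hKS : IsCompact KS)
    (hcover : ⋃ g : G, (σ g) '' KS = Set.univ)
    (hfin : {φ : G | (∃ ψ : G, φ = ψ⁻¹ * φ₀ * ψ) ∧
        ∃ x ∈ KS, d (0, x) (T φ₀, σ φ x) ≠ 0}.Finite) :
    ∃ x₀ : S, ∀ x : S,
      d (0, x) (T φ₀, σ φ₀ x) ≤ d (0, x₀) (T φ₀, σ φ₀ x₀) := by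
  have key : ∀ (g : G) (y : S), d (0, σ g y) (T φ₀, σ φ₀ (σ g y))
      = d (0, y) (T φ₀, σ (g⁻¹ * φ₀ * g) y) := by
    intro g y
    have h1 := hdinv g (0, y) (T φ₀, σ (g⁻¹ * φ₀ * g) y)
    have h2 := hdtrans (T g) (0, σ g y) (T φ₀, σ φ₀ (σ g y))
    have h3 : σ g (σ (g⁻¹ * φ₀ * g) y) = σ φ₀ (σ g y) := by
      rw [← hσmul, ← hσmul]
      congr 2
      group
    simp only [h3] at h1 h2
    exact h2.symm.trans h1
  have hx : ∀ x : S, ∃ g : G, ∃ y ∈ KS, σ g y = x := by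
    intro x
    have : x ∈ ⋃ g : G, (σ g) '' KS := by rw [hcover]; trivial
    simpa using this
  set F := {φ : G | (∃ ψ : G, φ = ψ⁻¹ * φ₀ * ψ) ∧
        ∃ x ∈ KS, d (0, x) (T φ₀, σ φ x) ≠ 0} with hF
  have hA : IsCompact (⋃ φ ∈ F, (fun x => d (0, x) (T φ₀, σ φ x)) '' KS) := by
    refine hfin.isCompact_biUnion fun φ _ => hKS.image ?_
    have hc : Continuous fun x : S => (((0 : ℝ), x), (T φ₀, σ φ x)) := by fun_prop
    exact hdcont.comp hc
  by_cases hne : (⋃ φ ∈ F, (fun x => d (0, x) (T φ₀, σ φ x)) '' KS).Nonempty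
  · obtain ⟨m, hm, hmax⟩ := hA.exists_isGreatest hne
    simp only [Set.mem_iUnion, Set.mem_image] at hm
    obtain ⟨φ, ⟨⟨ψ, rfl⟩, -⟩, z, hz, rfl⟩ := hm
    refine ⟨σ ψ z, fun x => ?_⟩
    obtain ⟨g, y, hy, rfl⟩ := hx x
    rw [key, key]
    by_cases h0 : d (0, y) (T φ₀, σ (g⁻¹ * φ₀ * g) y) = 0
    · rw [h0]; exact hdnonneg _ _
    · exact hmax (Set.mem_biUnion (x := g⁻¹ * φ₀ * g) ⟨⟨g, rfl⟩, y, hy, h0⟩ ⟨y, hy, rfl⟩)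
  · obtain ⟨x₀⟩ := ‹Nonempty S›
    refine ⟨x₀, fun x => ?_⟩
    obtain ⟨g, y, hy, rfl⟩ := hx x
    rw [key]
    by_cases h0 : d (0, y) (T φ₀, σ (g⁻¹ * φ₀ * g) y) = 0
    · rw [h0]; exact hdnonneg _ _
    · exact absurd ⟨_, Set.mem_biUnion (x := g⁻¹ * φ₀ * g) ⟨⟨g, rfl⟩, y, hy, h0⟩
        ⟨y, hy, rfl⟩⟩ hne
end
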